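/- arXiv:1203.4066 — 13 statements merged into one kernel-verified Lean document; each statement's English description precedes it below -/
import Mathlib

section
/- Let b be a positive integer and let H(b) = lcm(b, λ(b)) where λ is the Carmichael function. Let M be a positive integer greater than 1 with prime factorization M = p_1^{k_1} ⋯ p_t^{k_t}. Then M^M mod b ≠ (M + H(b))^(M + H(b)) mod b if and only if p_i^{k_i·M + 1} divides b for some i ∈ {1, …, t}. -/
/-- The Carmichael function `λ(n)`, defined as the exponent of the unit group of `ZMod n`. -/
noncomputable def carmichael (n : ℕ) : ℕ := Monoid.exponent (ZMod n)ˣ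

/-- `H b = lcm(b, λ(b))`. -/
noncomputable def H (b : ℕ) : ℕ := Nat.lcm b (carmichael b)

theorem H_pos (b : ℕ) (hb : 0 < b) : 0 < H b := by
  haveI : NeZero b := ⟨hb.ne'⟩
  unfold H carmichael
  exact Nat.lcm_pos hb (Nat.pos_of_ne_zero Monoid.exponent_ne_zero_of_finite)

theorem pow_H_modEq (b q M : ℕ) (hb : 0 < b) (hq : q ∣ b) (hc : M.Coprime q) :
    M ^ H b ≡ 1 [MOD q] := by
  have hq0 : q ≠ 0 := ne_zero_of_dvd_ne_zero hb.ne' hq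
  have h1 : carmichael q ∣ carmichael b := by
    have := ArithmeticFunction.carmichael_dvd hq
    rwa [ArithmeticFunction.carmichael_eq_exponent hq0,
      ArithmeticFunction.carmichael_eq_exponent hb.ne'] at this
  have h2 : carmichael q ∣ H b := h1.trans (Nat.dvd_lcm_right _ _)
  have h3 : (ZMod.unitOfCoprime M hc) ^ H b = 1 :=
    Monoid.exponent_dvd_iff_forall_pow_eq_one.1 h2 _
  rw [← ZMod.natCast_eq_natCast_iff]
  have h4 := congrArg (fun u : (ZMod q)ˣ => (u : ZMod q)) h3
  simpa using h4

theorem stmt_0 (b M : ℕ) (hb : 0 < b) (hM : 1 < M) :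
    M ^ M % b ≠ (M + H b) ^ (M + H b) % b ↔
      ∃ p : ℕ, p.Prime ∧ p ∣ M ∧ p ^ (M.factorization p * M + 1) ∣ b := by
  have hH := H_pos b hb
  have hM0 : M ≠ 0 := by omega
  have hbH : b ∣ H b := Nat.dvd_lcm_left _ _
  have hred : (M + H b) ^ (M + H b) ≡ M ^ (M + H b) [MOD b] := by
    apply Nat.ModEq.pow
    have : H b ≡ 0 [MOD b] := (Nat.modEq_zero_iff_dvd).2 hbH
    simpa using this.add_left M
  constructor
  · intro hne
    by_contra hno
    push Not at hno
    apply hne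
    refine Nat.ModEq.trans ?_ hred.symm
    have hle : M ^ M ≤ M ^ (M + H b) := Nat.pow_le_pow_right (by omega) (by omega)
    rw [Nat.modEq_iff_dvd' hle, Nat.dvd_iff_prime_pow_dvd_dvd]
    intro p k hp hk
    by_cases hpM : p ∣ M
    · have hk' : k ≤ M.factorization p * M := by
        by_contra hlt
        exact hno p hp hpM ((pow_dvd_pow p (by omega)).trans hk)
      have h1 : p ^ k ∣ M ^ M := by
        refine (pow_dvd_pow p hk').trans ?_
        rw [pow_mul]
        exact pow_dvd_pow_of_dvd (Nat.ordProj_dvd M p) M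
      exact Nat.dvd_sub (h1.trans (pow_dvd_pow M (by omega))) h1
    · have hc : M.Coprime (p ^ k) := (((Nat.Prime.coprime_iff_not_dvd hp).2 hpM).symm).pow_right k
      rw [← Nat.modEq_iff_dvd' hle, pow_add]
      simpa using ((pow_H_modEq b _ M hb hk hc).mul_left (M ^ M)).symm
  · rintro ⟨p, hp, hpM, hd⟩ heq
    have h1 : M ^ M ≡ M ^ (M + H b) [MOD p ^ (M.factorization p * M + 1)] :=
      (Nat.ModEq.trans heq hred).of_dvd hd
    have hk : 1 ≤ M.factorization p := hp.factorization_pos_of_dvd hM0 hpM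
    have h2 : p ^ (M.factorization p * M + 1) ∣ M ^ (M + H b) := by
      rw [hp.pow_dvd_iff_le_factorization (pow_ne_zero _ hM0)]
      simp only [Nat.factorization_pow, Finsupp.smul_apply, smul_eq_mul]
      nlinarith
    have h3 := (h1.dvd_iff dvd_rfl).2 h2
    rw [hp.pow_dvd_iff_le_factorization (pow_ne_zero _ hM0)] at h3
    simp only [Nat.factorization_pow, Finsupp.smul_apply, smul_eq_mul] at h3
    nlinarith
end

section
/- Let b and T be positive integers and suppose there exists n₀ such that n^n ≡ (n+T)^(n+T) (mod b) for every n ≥ n₀. Then b divides T. -/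
theorem stmt_1 (b T : ℕ) (hb : 0 < b) (hT : 0 < T)
    (hper : ∃ n₀ : ℕ, ∀ n ≥ n₀, n ^ n % b = (n + T) ^ (n + T) % b) :
    b ∣ T := by
  obtain ⟨n₀, h⟩ := hper
  have hprime : ∀ p : ℕ, p.Prime → p ∣ b → p ∣ T := by
    intro p hp hpb
    have h1 : (b * (n₀ + 1)) ^ (b * (n₀ + 1)) ≡ _ [MOD b] := h (b * (n₀ + 1)) (by nlinarith)
    have h2 := h1.of_dvd hpb
    have hpn : p ∣ b * (n₀ + 1) := hpb.mul_right _
    have h3 : p ∣ (b * (n₀ + 1)) ^ (b * (n₀ + 1)) := dvd_pow hpn (by positivity)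
    have h4 := (h2.dvd_iff dvd_rfl).1 h3
    exact (Nat.dvd_add_right hpn).1 (hp.dvd_of_dvd_pow h4)
  have h1 : (b * n₀ + 1) ^ (b * n₀ + 1) ≡ (b * n₀ + 1 + T) ^ (b * n₀ + 1 + T) [MOD b] :=
    h (b * n₀ + 1) (by nlinarith)
  have h0 : (b * n₀ + 1) ^ (b * n₀ + 1) ≡ 1 [MOD b] := by
    have : b * n₀ + 1 ≡ 1 [MOD b] := by simp [Nat.ModEq]
    simpa using this.pow (b * n₀ + 1)
  have h2 := h0.symm.trans h1
  set m := b * n₀ + 1 + T with hm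
  have h3 : (b : ℤ) ∣ (m : ℤ) ^ m - 1 := by
    have := (Nat.modEq_iff_dvd).1 h2
    simpa using this
  have hg : (∑ i ∈ Finset.range m, (m : ℤ) ^ i) * ((m : ℤ) - 1) = (m : ℤ) ^ m - 1 :=
    geom_sum_mul _ _
  have hcop : Nat.Coprime b (∑ i ∈ Finset.range m, m ^ i) := by
    apply Nat.Coprime.symm
    refine Nat.coprime_of_dvd fun p hp hS hpb => ?_
    have hpT := hprime p hp hpb
    have hm1 : m ≡ 1 [MOD p] := by
      apply Nat.ModEq.symm
      rw [Nat.modEq_iff_dvd' (by omega)]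
      have : m - 1 = b * n₀ + T := by omega
      rw [this]
      exact dvd_add (hpb.mul_right _) hpT
    have hz : ((m : ℕ) : ZMod p) = 1 := by
      simpa using (ZMod.natCast_eq_natCast_iff _ _ _).2 hm1
    have hS0 := (ZMod.natCast_eq_zero_iff _ _).2 hS
    push_cast at hS0
    simp only [hz, one_pow, Finset.sum_const, Finset.card_range, nsmul_eq_mul, mul_one] at hS0
    haveI := Fact.mk hp
    exact one_ne_zero hS0
  rw [← hg] at h3
  have hci : IsCoprime (b : ℤ) (∑ i ∈ Finset.range m, (m : ℤ) ^ i) := by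
    have := Nat.isCoprime_iff_coprime.2 hcop
    simpa using this
  have h4 := hci.dvd_of_dvd_mul_left h3
  have h5 : (m : ℤ) - 1 = b * n₀ + T := by rw [hm]; push_cast; ring
  rw [h5] at h4
  have h6 := (dvd_add_right (dvd_mul_right (b : ℤ) n₀)).1 h4
  exact_mod_cast h6
end

section
/- Let b and T be positive integers and suppose there exists n₀ such that n^n ≡ (n+T)^(n+T) (mod b) for every n ≥ n₀. Then λ(b) divides T, where λ is the Carmichael function. -/
theorem stmt_2 (b T : ℕ) (hb : 0 < b) (hT : 0 < T)
    (hper : ∃ n₀ : ℕ, ∀ n ≥ n₀, n ^ n % b = (n + T) ^ (n + T) % b) :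
    carmichael b ∣ T := by
  obtain ⟨n₀, h⟩ := hper
  have hp : ∀ p : ℕ, p.Prime → p ∣ b → p ∣ T := by
    intro p pp pb
    have hn : n₀ ≤ p * (n₀ + 1) := by nlinarith [pp.pos]
    have h2 : (p * (n₀ + 1)) ^ (p * (n₀ + 1)) ≡
        (p * (n₀ + 1) + T) ^ (p * (n₀ + 1) + T) [MOD p] :=
      Nat.ModEq.of_dvd pb (h _ hn)
    have h3 : p ∣ (p * (n₀ + 1)) ^ (p * (n₀ + 1)) :=
      dvd_pow (Dvd.intro _ rfl) (Nat.mul_pos pp.pos (Nat.succ_pos _)).ne'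
    have h4 := pp.dvd_of_dvd_pow ((h2.dvd_iff dvd_rfl).1 h3)
    exact (Nat.dvd_add_right (Dvd.intro _ rfl)).1 h4
  have hz : ∀ n ≥ n₀, (n : ZMod b) ^ n = ((n : ZMod b) + T) ^ (n + T) := by
    intro n hn
    have := (ZMod.natCast_eq_natCast_iff _ _ b).2 (h n hn)
    push_cast at this
    exact this
  have hk : ∀ j ≥ n₀, ((1 : ZMod b) + T) ^ (1 + j * b + T) = 1 := by
    intro j hj
    have := hz (1 + j * b) (by nlinarith)
    simpa using this.symm
  have hcop : Nat.Coprime b (1 + T) := by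
    apply Nat.coprime_of_dvd
    intro p pp pb pT
    have := (Nat.dvd_add_left (hp p pp pb)).1 pT
    exact pp.one_lt.ne' (Nat.dvd_one.1 this)
  have ho : ∀ j ≥ n₀, orderOf ((1 : ZMod b) + T) ∣ 1 + j * b + T :=
    fun j hj => orderOf_dvd_of_pow_eq_one (hk j hj)
  have hob : orderOf ((1 : ZMod b) + T) ∣ b := by
    have h1 := ho n₀ le_rfl
    have h2 := ho (n₀ + 1) (by omega)
    rw [show 1 + (n₀ + 1) * b + T = (1 + n₀ * b + T) + b by ring] at h2
    exact (Nat.dvd_add_right h1).1 h2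
  have hoT : orderOf ((1 : ZMod b) + T) ∣ 1 + T := by
    have h1 := ho n₀ le_rfl
    rw [show 1 + n₀ * b + T = n₀ * b + (1 + T) by ring] at h1
    exact (Nat.dvd_add_right (hob.mul_left _)).1 h1
  have h1 := orderOf_eq_one_iff.1 (Nat.eq_one_of_dvd_coprimes hcop hob hoT)
  have hT0 : (T : ZMod b) = 0 := by simpa using h1
  apply Monoid.exponent_dvd_of_forall_pow_eq_one
  intro u
  have : NeZero b := ⟨hb.ne'⟩
  have hc : (((u : ZMod b).val + n₀ * b : ℕ) : ZMod b) = u := by simp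
  have h5 := hz ((u : ZMod b).val + n₀ * b) (by nlinarith [Nat.zero_le (u : ZMod b).val])
  rw [hc, hT0, add_zero, pow_add _ _ T] at h5
  have h6 : u ^ ((u : ZMod b).val + n₀ * b) =
      u ^ ((u : ZMod b).val + n₀ * b) * u ^ T := by
    ext
    push_cast
    exact h5
  exact (mul_eq_left.1 h6.symm)
end

section
/- For every positive integer b, the sequence S_b(n) = n^n mod b is eventually periodic, and its least eventual period equals H(b) = lcm(b, λ(b)), where λ is the Carmichael function. That is: S_b(n) = S_b(n + H(b)) for all sufficiently large n, and any T ≥ 1 with S_b(n) = S_b(n+T) for all sufficiently large n satisfies H(b) ∣ T. -/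
theorem aux_pow (b : ℕ) (hb : 0 < b) (a n m : ℕ) (hn : b ≤ n) (hm : carmichael b ∣ m) :
    a ^ (n + m) ≡ a ^ n [MOD b] := by
  have key : ∀ p k : ℕ, p.Prime → p ^ k ∣ b → a ^ (n + m) ≡ a ^ n [MOD p ^ k] := by
    intro p k hp hk
    by_cases h : p ∣ a
    · have hkn : k ≤ n := (Nat.lt_pow_self hp.one_lt).le.trans ((Nat.le_of_dvd hb hk).trans hn)
      have h1 : p ^ k ∣ a ^ n := (pow_dvd_pow p hkn).trans (pow_dvd_pow_of_dvd h n)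
      have h2 : p ^ k ∣ a ^ (n + m) := h1.trans (pow_dvd_pow a (Nat.le_add_right n m))
      exact ((Nat.modEq_zero_iff_dvd).2 h2).trans ((Nat.modEq_zero_iff_dvd).2 h1).symm
    · have hc : Nat.Coprime a (p ^ k) :=
        (Nat.Coprime.pow_right k ((Nat.Prime.coprime_iff_not_dvd hp).2 h).symm)
      haveI : NeZero b := ⟨hb.ne'⟩
      obtain ⟨v, hv⟩ := ZMod.unitsMap_surjective hk (ZMod.unitOfCoprime a hc)
      have hvm : v ^ m = 1 := by
        obtain ⟨c, rfl⟩ := hm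
        rw [pow_mul, carmichael, Monoid.pow_exponent_eq_one, one_pow]
      have hu : (ZMod.unitOfCoprime a hc) ^ m = 1 := by
        rw [← hv, ← map_pow, hvm, map_one]
      have hu' := congrArg (Units.val) hu
      rw [Units.val_pow_eq_pow_val, ZMod.coe_unitOfCoprime, Units.val_one] at hu'
      rw [← ZMod.natCast_eq_natCast_iff]
      push_cast
      rw [pow_add, hu', mul_one]
  have hle : a ^ n ≡ a ^ (n + m) [MOD b] := by
    rw [← Int.natCast_modEq_iff, Int.modEq_iff_dvd, Int.natCast_dvd,
      Nat.dvd_iff_prime_pow_dvd_dvd]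
    intro p k hp hk
    have := (key p k hp hk).symm
    rwa [← Int.natCast_modEq_iff, Int.modEq_iff_dvd, Int.natCast_dvd] at this
  exact hle.symm

theorem stmt_3 (b : ℕ) (hb : 0 < b) :
    (∃ n₀ : ℕ, ∀ n ≥ n₀, n ^ n % b = (n + H b) ^ (n + H b) % b) ∧
      (∀ T : ℕ, 0 < T →
        (∃ n₀ : ℕ, ∀ n ≥ n₀, n ^ n % b = (n + T) ^ (n + T) % b) → H b ∣ T) := by
  refine ⟨⟨b, fun n hn => ?_⟩, ?_⟩
  · have h1 : n + H b ≡ n [MOD b] := by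
      have : H b ≡ 0 [MOD b] := (Nat.modEq_zero_iff_dvd).2 (Nat.dvd_lcm_left _ _)
      simpa using this.add_left n
    exact ((h1.pow (n + H b)).trans
      (aux_pow b hb n n (H b) hn (Nat.dvd_lcm_right _ _))).symm
  · rintro T hT ⟨n₀, h⟩
    have hc : Nat.Coprime b (1 + T) := by
      refine Nat.Coprime.symm (Nat.coprime_of_dvd fun p hp h1 hpb => ?_)
      have h2 : (p * (n₀ + 1)) ^ (p * (n₀ + 1)) ≡
          (p * (n₀ + 1) + T) ^ (p * (n₀ + 1) + T) [MOD p] :=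
        Nat.ModEq.of_dvd hpb (h _ (by nlinarith [hp.two_le]))
      have h3 : p ∣ (p * (n₀ + 1)) ^ (p * (n₀ + 1)) :=
        dvd_pow (dvd_mul_right _ _) (by have := hp.pos; positivity)
      have h4 := hp.dvd_of_dvd_pow ((h2.dvd_iff dvd_rfl).1 h3)
      have h5 : p ∣ T := (Nat.dvd_add_right (dvd_mul_right _ _)).1 h4
      exact hp.one_lt.ne' (Nat.dvd_one.1 ((Nat.dvd_add_left h5).1 h1))
    have hz : ∀ n ≥ n₀, (n : ZMod b) ^ n = ((n : ZMod b) + T) ^ (n + T) := by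
      intro n hn
      have := (ZMod.natCast_eq_natCast_iff _ _ b).2 (h n hn)
      push_cast at this
      exact this
    have ho : ∀ k ≥ n₀, orderOf (1 + (T : ZMod b)) ∣ k * b + (1 + T) := by
      intro k hk
      have := hz (k * b + 1) (by nlinarith)
      rw [orderOf_dvd_iff_pow_eq_one, ← add_assoc]
      push_cast at this
      simpa using this.symm
    have o1 := ho n₀ le_rfl
    have o2 := ho (n₀ + 1) (by omega)
    have o3 : orderOf (1 + (T : ZMod b)) ∣ b := by
      have e : (n₀ + 1) * b + (1 + T) = (n₀ * b + (1 + T)) + b := by ring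
      rw [e] at o2
      exact (Nat.dvd_add_right o1).1 o2
    have o4 : orderOf (1 + (T : ZMod b)) ∣ 1 + T :=
      (Nat.dvd_add_right (o3.mul_left _)).1 o1
    have o5 := Nat.eq_one_of_dvd_coprimes hc o3 o4
    rw [orderOf_eq_one_iff] at o5
    have hT0 : (T : ZMod b) = 0 := by simpa using o5
    have hbT : b ∣ T := (ZMod.natCast_eq_zero_iff _ _).1 hT0
    refine Nat.lcm_dvd hbT ?_
    refine Monoid.exponent_dvd_of_forall_pow_eq_one fun u => ?_
    haveI : NeZero b := ⟨hb.ne'⟩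
    have := hz (n₀ * b + (u : ZMod b).val) (by nlinarith)
    rw [hT0, add_zero] at this
    have hcast : ((n₀ * b + (u : ZMod b).val : ℕ) : ZMod b) = u := by simp
    rw [hcast, pow_add _ _ T] at this
    have h6 : u ^ (n₀ * b + (u : ZMod b).val) = u ^ (n₀ * b + (u : ZMod b).val) * u ^ T := by
      ext
      push_cast
      exact this
    exact (left_eq_mul.1 h6)
end

section
/- Let b be a positive integer with prime factorization b = p_1^{s_1} ⋯ p_t^{s_t}. The sequence S_b(n) = n^n mod b is (purely) periodic (i.e., S_b(n) = S_b(n + H(b)) for every n ≥ 1, where H(b) = lcm(b, λ(b))) if and only if s_i ≤ p_i for every i ∈ {1, …, t}. -/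
theorem stmt_4 (b : ℕ) (hb : 0 < b) :
    (∀ n : ℕ, 1 ≤ n → n ^ n % b = (n + H b) ^ (n + H b) % b) ↔
      ∀ p : ℕ, p.Prime → p ∣ b → b.factorization p ≤ p := by
  have hbH : b ∣ H b := Nat.dvd_lcm_left _ _
  have hHpos : 0 < H b := by
    haveI : NeZero b := ⟨hb.ne'⟩
    exact Nat.lcm_pos hb (Monoid.exponent_pos.mpr Monoid.ExponentExists.of_finite)
  constructor
  · intro h p hp hpb
    have h1 : p ^ p ≡ (p + H b) ^ (p + H b) [MOD b] := h p hp.one_lt.le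
    have hd : p ^ b.factorization p ∣ b := Nat.ordProj_dvd b p
    have h2 := h1.of_dvd hd
    have h3 : p ^ b.factorization p ∣ (p + H b) ^ (p + H b) := by
      have : b.factorization p ≤ p + H b := by
        have := Nat.le_of_dvd hHpos hbH
        have := Nat.le_of_dvd hb hd
        have := (Nat.lt_pow_self hp.one_lt : b.factorization p < _)
        omega
      exact (pow_dvd_pow _ this).trans
        (pow_dvd_pow_of_dvd ((dvd_refl p).add (hpb.trans hbH)) _)
    have h4 := (h2.dvd_iff dvd_rfl).mpr h3
    exact (Nat.pow_dvd_pow_iff_le_right hp.one_lt).mp h4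
  · intro h n hn
    have key : b ∣ n ^ n * (n ^ H b - 1) := by
      rw [Nat.dvd_iff_prime_pow_dvd_dvd]
      intro p k hp hk
      rcases Nat.eq_zero_or_pos k with rfl | hk0
      · simp
      have hpb : p ∣ b := (dvd_pow_self p hk0.ne').trans hk
      by_cases hpn : p ∣ n
      · apply Dvd.dvd.mul_right
        have h1 : k ≤ n := ((hp.pow_dvd_iff_le_factorization hb.ne').mp hk).trans
          ((h p hp hpb).trans (Nat.le_of_dvd hn hpn))
        exact (pow_dvd_pow _ h1).trans (pow_dvd_pow_of_dvd hpn _)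
      · apply Dvd.dvd.mul_left
        have hc : n.Coprime (p ^ k) := 
          (Nat.Coprime.pow_left k ((hp.coprime_iff_not_dvd).mpr hpn)).symm
        haveI : NeZero b := ⟨hb.ne'⟩
        have he : Monoid.exponent (ZMod (p ^ k))ˣ ∣ H b :=
          (MonoidHom.exponent_dvd (f := ZMod.unitsMap hk) (ZMod.unitsMap_surjective hk)).trans
            (Nat.dvd_lcm_right _ _)
        have hu : (ZMod.unitOfCoprime n hc) ^ H b = 1 :=
          Monoid.exponent_dvd_iff_forall_pow_eq_one.mp he _
        have hv : ((n ^ H b : ℕ) : ZMod (p ^ k)) = ((1 : ℕ) : ZMod (p ^ k)) := by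
          have := congrArg Units.val hu
          simpa using this
        have hm := (ZMod.natCast_eq_natCast_iff _ _ _).mp hv
        exact (Nat.modEq_iff_dvd' (Nat.one_le_pow _ _ hn)).mp hm.symm
    have h1 : n ^ n ≡ n ^ (n + H b) [MOD b] := by
      rw [Nat.modEq_iff_dvd' (Nat.pow_le_pow_right hn (Nat.le_add_right _ _))]
      rw [pow_add]
      simpa [Nat.mul_sub] using key
    have h2 : n ≡ n + H b [MOD b] := by
      rw [Nat.modEq_iff_dvd' (Nat.le_add_right _ _)]
      simpa using hbH
    exact h1.trans (h2.pow _)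
end

section
/- Let b = 2m be an even square-free positive integer. Then for every positive integer n, the last non-zero digit of n^n in base b equals m if and only if the last non-zero digit of n in base b equals m. That is, {n : 𝔖_b(n) = m} = {n : L_b(n) = m}. -/
/-- The last non-zero digit of `n` in base `b`: if `n = b^r * n'` with `b ∤ n'`,
this is `n' % b`. -/
def lastNonzeroDigit (b n : ℕ) : ℕ := (n / b ^ (Nat.maxPowDiv b n)) % b

/-- `𝔖_b(n)`: the last non-zero digit of `n^n` in base `b`. -/
def lnz (b n : ℕ) : ℕ := lastNonzeroDigit b (n ^ n)

theorem lnd_iff (m : ℕ) (hm : 0 < m) (N : ℕ) (hN : 0 < N) :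
    lastNonzeroDigit (2 * m) N = m ↔ ∃ s k, N = (2 * m) ^ s * (m * (2 * k + 1)) := by
  have hd : lastNonzeroDigit (2 * m) N = (N / (2 * m) ^ padicValNat (2 * m) N) % (2 * m) := rfl
  have hb : 0 < 2 * m := by omega
  rw [hd]
  constructor
  · intro h
    refine ⟨padicValNat (2 * m) N, (N / (2 * m) ^ padicValNat (2 * m) N) / (2 * m), ?_⟩
    have h1 := Nat.div_add_mod (N / (2 * m) ^ padicValNat (2 * m) N) (2 * m)
    rw [h] at h1
    have h2 := Nat.mul_div_cancel' (⟨Nat.divMaxPow N (2 * m), (Nat.pow_padicValNat_mul_divMaxPow (2 * m) N).symm⟩ : (2 * m) ^ padicValNat (2 * m) N ∣ N)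
    calc N = (2 * m) ^ padicValNat (2 * m) N * (N / (2 * m) ^ padicValNat (2 * m) N) := h2.symm
      _ = _ := by
        congr 1
        rw [← h1]
        conv_rhs => rw [h1]
        nlinarith
  · rintro ⟨s, k, rfl⟩
    have hmod : (m * (2 * k + 1)) % (2 * m) = m := by
      have : m * (2 * k + 1) = m + 2 * m * k := by ring
      rw [this, Nat.add_mul_mod_self_left, Nat.mod_eq_of_lt (by omega)]
    have hnd : ¬ (2 * m) ∣ m * (2 * k + 1) := by
      intro h
      have := Nat.mod_eq_zero_of_dvd h
      omega
    have h0 : m * (2 * k + 1) ≠ 0 := by positivity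
    rw [padicValNat_base_pow_mul (by omega) h0, padicValNat.eq_zero_of_not_dvd hnd, zero_add,
      Nat.mul_div_cancel_left _ (by positivity), hmod]

theorem stmt_6 (m : ℕ) (hm : 0 < m) (hsf : Squarefree (2 * m)) :
    ∀ n : ℕ, 0 < n → (lnz (2 * m) n = m ↔ lastNonzeroDigit (2 * m) n = m) := by
  intro n hn
  have hmsf : Squarefree m := hsf.squarefree_of_dvd (Dvd.intro_left 2 rfl)
  have hmo : Odd m := by
    rw [← Nat.not_even_iff_odd]
    rintro h
    obtain ⟨c, hc⟩ := h.two_dvd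
    have := hsf 2 ⟨c, by rw [hc]; ring⟩
    simp at this
  unfold lnz
  rw [lnd_iff m hm n hn, lnd_iff m hm (n ^ n) (by positivity)]
  constructor
  · rintro ⟨s, k, h⟩
    obtain ⟨r, q, hq, hnq⟩ := Nat.exists_eq_two_pow_mul_odd hn.ne'
    have hodd : Odd (m ^ (s + 1) * (2 * k + 1)) := (hmo.pow).mul (odd_two_mul_add_one k)
    have e : 2 ^ (r * n) * q ^ n = 2 ^ s * (m ^ (s + 1) * (2 * k + 1)) := by
      calc 2 ^ (r * n) * q ^ n = (2 ^ r * q) ^ n := by rw [mul_pow, pow_mul]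
        _ = n ^ n := by rw [← hnq]
        _ = _ := by rw [h, mul_pow]; ring
    have hs : s = r * n := by
      have h1 : 2 ^ s ∣ 2 ^ (r * n) :=
        (Nat.Coprime.pow_left s (Nat.coprime_two_left.2 (hq.pow (n := n)))).dvd_of_dvd_mul_right
          ⟨_, e⟩
      have h2 : 2 ^ (r * n) ∣ 2 ^ s :=
        (Nat.Coprime.pow_left _ (Nat.coprime_two_left.2 hodd)).dvd_of_dvd_mul_right
          ⟨_, e.symm⟩
      exact Nat.pow_right_injective le_rfl (Nat.dvd_antisymm h1 h2)
    subst hs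
    have e2 : q ^ n = m ^ (r * n + 1) * (2 * k + 1) := Nat.eq_of_mul_eq_mul_left (by positivity) e
    have h3 : m ^ r ∣ q := by
      rw [← Nat.pow_dvd_pow_iff hn.ne', ← pow_mul, e2, pow_succ, mul_assoc]
      exact Dvd.intro _ rfl
    obtain ⟨t, rfl⟩ := h3
    have e3 : t ^ n = m * (2 * k + 1) := by
      have : 0 < m ^ (r * n) := by positivity
      apply Nat.eq_of_mul_eq_mul_left this
      rw [← mul_assoc, ← pow_succ, ← e2, mul_pow, pow_mul]
    have h4 : m ∣ t := (hmsf.dvd_pow_iff_dvd hn.ne').1 ⟨_, e3⟩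
    obtain ⟨u, rfl⟩ := h4
    have hu : Odd u := (Nat.odd_mul.1 (Nat.odd_mul.1 hq).2).2
    obtain ⟨v, rfl⟩ := hu
    exact ⟨r, v, by rw [mul_pow, mul_assoc]; exact hnq⟩
  · rintro ⟨s, k, h⟩
    obtain ⟨v, hv⟩ : Odd (m ^ (n - 1) * (2 * k + 1) ^ n) :=
      (hmo.pow).mul (odd_two_mul_add_one k).pow
    refine ⟨s * n, v, ?_⟩
    rw [← hv, ← mul_assoc m, ← pow_succ', Nat.sub_add_cancel hn, ← mul_pow, pow_mul, ← mul_pow, ← h]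
end

section
/- If p is a prime, then for every positive integer n, the last non-zero digit of n^n in base p equals the last non-zero digit of (pn)^(pn) in base p; i.e., 𝔖_p(n) = 𝔖_p(pn). -/
theorem lnd_aux (p : ℕ) (hp : p.Prime) (k u : ℕ) (hu : ¬ p ∣ u) :
    lastNonzeroDigit p (p ^ k * u) = u % p := by
  have h0 : u ≠ 0 := by rintro rfl; exact hu (dvd_zero p)
  have h : Nat.maxPowDiv p (p ^ k * u) = k := by
    change padicValNat p (p ^ k * u) = k
    have : Fact p.Prime := ⟨hp⟩
    rw [padicValNat.mul (pow_ne_zero _ hp.ne_zero) h0, padicValNat.prime_pow,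
      padicValNat.eq_zero_of_not_dvd hu, add_zero]
  unfold lastNonzeroDigit
  rw [h, Nat.mul_div_cancel_left _ (pow_pos hp.pos k)]

theorem stmt_8 (p : ℕ) (hp : p.Prime) (n : ℕ) (hn : 0 < n) :
    lnz p n = lnz p (p * n) := by
  obtain ⟨e, m, hm, he⟩ := Nat.exists_eq_pow_mul_and_not_dvd hn.ne' p hp.ne_one
  have h1 : n ^ n = p ^ (e * n) * m ^ n := by
    conv_lhs => rw [show n ^ n = (p ^ e * m) ^ n by rw [← he]]
    rw [mul_pow, ← pow_mul]
  have h2 : (p * n) ^ (p * n) = p ^ (p * n + e * n * p) * (m ^ n) ^ p := by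
    rw [mul_pow, mul_comm p n, pow_mul n n p, h1, mul_pow, ← pow_mul, pow_add, mul_assoc, mul_assoc]
  have hd : ¬ p ∣ m ^ n := fun h => hm (hp.dvd_of_dvd_pow h)
  have hd2 : ¬ p ∣ (m ^ n) ^ p := fun h => hd (hp.dvd_of_dvd_pow h)
  unfold lnz
  rw [h2, h1, lnd_aux p hp _ _ hd, lnd_aux p hp _ _ hd2]
  have : Fact p.Prime := ⟨hp⟩
  apply (ZMod.natCast_eq_natCast_iff' _ _ p).1
  rw [Nat.cast_pow (m ^ n) p, ZMod.pow_card]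
end

section
/- Let p be a prime and suppose the sequence 𝔖_p(n) of last non-zero digits of n^n in base p is eventually periodic with least eventual period T. Then p does not divide T. -/
theorem lnzd_eq (p : ℕ) (hp : p.Prime) (r u : ℕ) (hu : ¬ p ∣ u) :
    lastNonzeroDigit p (p ^ r * u) = u % p := by
  haveI := Fact.mk hp
  have hu0 : u ≠ 0 := by rintro rfl; simp at hu
  have h : Nat.maxPowDiv p (p ^ r * u) = r := by
    change padicValNat p (p ^ r * u) = r
    rw [padicValNat.mul (pow_ne_zero _ hp.ne_zero) hu0, padicValNat.prime_pow,
      padicValNat.eq_zero_of_not_dvd hu, add_zero]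
  rw [lastNonzeroDigit, h, Nat.mul_div_cancel_left _ (pow_pos hp.pos r)]

theorem lnz_mul (p : ℕ) (hp : p.Prime) (n : ℕ) (hn : 0 < n) : lnz p (p * n) = lnz p n := by
  haveI := Fact.mk hp
  obtain ⟨r, u, hu, h⟩ := Nat.exists_eq_pow_mul_and_not_dvd (n := n ^ n)
    (pow_ne_zero _ hn.ne') p hp.ne_one
  have e : (p * n) ^ (p * n) = p ^ (p * n + r * p) * u ^ p := by
    rw [mul_pow, mul_comm p n, pow_mul n, h, mul_pow, ← pow_mul, pow_add, mul_assoc]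
  rw [lnz, lnz, e, h, lnzd_eq p hp _ _ hu,
    lnzd_eq p hp _ _ (fun hd => hu (hp.dvd_of_dvd_pow hd))]
  have : ((u ^ p : ℕ) : ZMod p) = (u : ℕ) := by
    push_cast
    exact ZMod.pow_card _
  exact (ZMod.natCast_eq_natCast_iff' _ _ _).1 this

theorem stmt_9 (p : ℕ) (hp : p.Prime) (T : ℕ) (hT : 0 < T)
    (hper : ∃ n₀ : ℕ, ∀ n ≥ n₀, lnz p (n + T) = lnz p n)
    (hleast : ∀ T' : ℕ, 0 < T' →
      (∃ n₀ : ℕ, ∀ n ≥ n₀, lnz p (n + T') = lnz p n) → T ≤ T') :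
    ¬ p ∣ T := by
  rintro ⟨t, rfl⟩
  have ht : 0 < t := Nat.pos_of_mul_pos_left hT
  obtain ⟨n₀, h⟩ := hper
  have := hleast t ht ⟨n₀ + 1, fun n hn => by
    have hpn : n ≤ p * n := Nat.le_mul_of_pos_left n hp.pos
    rw [← lnz_mul p hp (n + t) (by omega), ← lnz_mul p hp n (by omega), mul_add]
    exact h _ (by omega)⟩
  have h2 := hp.two_le
  nlinarith
end

section
/- If p is an odd prime, then the sequence 𝔖_p(n) of last non-zero digits of n^n in base p is not eventually periodic. -/
theorem lnz_aux (p : ℕ) (hp : p.Prime) [Fact p.Prime] (r m : ℕ) (hm : ¬ p ∣ m) :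
    (lnz p (p ^ r * m) : ZMod p) = (m : ZMod p) ^ m := by
  have h : (p ^ r * m) ^ (p ^ r * m) = p ^ (r * (p ^ r * m)) * m ^ (p ^ r * m) := by
    rw [mul_pow, ← pow_mul]
  have hm' : ¬ p ∣ m ^ (p ^ r * m) := fun h => hm (hp.dvd_of_dvd_pow h)
  have hm0 : m ≠ 0 := by rintro rfl; simp at hm
  have h2 : Nat.maxPowDiv p ((p ^ r * m) ^ (p ^ r * m)) = r * (p ^ r * m) := by
    rw [h]
    change padicValNat p _ = _
    rw [padicValNat.mul (pow_ne_zero _ hp.ne_zero) (pow_ne_zero _ hm0),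
      padicValNat.prime_pow, padicValNat.eq_zero_of_not_dvd hm', add_zero]
  unfold lnz lastNonzeroDigit
  rw [h2, h, Nat.mul_div_cancel_left _ (pow_pos hp.pos _), ZMod.natCast_mod]
  push_cast
  rw [pow_mul, ZMod.pow_card_pow]

theorem stmt_10 (p : ℕ) (hp : p.Prime) (hodd : Odd p) :
    ¬ ∃ T : ℕ, 0 < T ∧ ∃ n₀ : ℕ, ∀ n ≥ n₀, lnz p (n + T) = lnz p n := by
  rintro ⟨T, hT, n₀, H⟩
  haveI : Fact p.Prime := ⟨hp⟩
  obtain ⟨s, t, ht, rfl⟩ := Nat.exists_eq_pow_mul_and_not_dvd hT.ne' p hp.ne_one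
  have key : ∀ u : ℕ, ¬ p ∣ u → (t : ZMod p) ^ u * (t : ZMod p) ^ t = (u : ZMod p) ^ u := by
    intro u hu
    have hu0 : 0 < u := Nat.pos_of_ne_zero (by rintro rfl; simp at hu)
    have hn : p ^ (s + (n₀ + 1)) * u ≥ n₀ := by
      have h1 : s + (n₀ + 1) < p ^ (s + (n₀ + 1)) := Nat.lt_pow_self hp.one_lt
      have h2 := Nat.le_mul_of_pos_right (p ^ (s + (n₀ + 1))) hu0
      omega
    have h := congrArg (Nat.cast : ℕ → ZMod p) (H _ hn)
    have e : p ^ (s + (n₀ + 1)) * u + p ^ s * t = p ^ s * (p ^ (n₀ + 1) * u + t) := by ring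
    have hd : ¬ p ∣ p ^ (n₀ + 1) * u + t := by
      rw [← Nat.dvd_add_right (Dvd.dvd.mul_right (dvd_pow_self p (Nat.succ_ne_zero n₀)) u)] at ht
      exact ht
    rw [e, lnz_aux p hp _ _ hd, lnz_aux p hp _ _ hu] at h
    rw [← h]
    push_cast
    rw [CharP.cast_eq_zero (ZMod p) p, zero_pow (Nat.succ_ne_zero _), zero_mul, zero_add, pow_add, pow_mul,
      ZMod.pow_card_pow]
  have h2p := hp.two_le
  have k1 := key 1 (by rw [Nat.dvd_one]; exact hp.ne_one)
  have k2 := key (p + 1) (by rw [Nat.dvd_add_right (dvd_refl p), Nat.dvd_one]; exact hp.ne_one)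
  have k3 := key (p + (p - 1)) (by
    rw [Nat.dvd_add_right (dvd_refl p)]
    exact fun h => absurd (Nat.le_of_dvd (by omega) h) (by omega))
  have ho : Odd (p + (p - 1)) := ⟨p - 1, by omega⟩
  simp only [Nat.cast_one, one_pow, pow_one] at k1
  have ht1 : (t : ZMod p) = 1 := by
    rw [pow_add, ZMod.pow_card, pow_one, mul_assoc, k1] at k2
    simpa using k2
  rw [ht1] at k3
  have hc : ((p + (p - 1) : ℕ) : ZMod p) = -1 := by
    rw [Nat.cast_add, Nat.cast_sub hp.one_le]; simp
  rw [hc, ho.neg_one_pow] at k3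
  simp only [one_pow, mul_one] at k3
  haveI : Fact (2 < p) := ⟨by
    rcases hodd with ⟨k, rfl⟩
    omega⟩
  exact ZMod.neg_one_ne_one k3.symm
end

section
/- Let p be a prime, t > 1 an integer, and define S(n) = 𝔖_{p^t}(p^t·n). If the sequence S is eventually periodic, then t is a power of p, i.e., t = p^s for some integer s ≥ 0. -/
theorem lnz_aux_digit (p t : ℕ) (hp : p.Prime) (ht : 1 < t) (w c : ℕ) (hc : ¬ p ∣ c) :
    lastNonzeroDigit (p ^ t) (p ^ w * c) = (p ^ (w % t) * c) % p ^ t := by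
  have hc0 : c ≠ 0 := by rintro rfl; simp at hc
  have hp0 : 0 < p := hp.pos
  have e : (p ^ t) ^ (w / t) * (p ^ (w % t) * c) = p ^ w * c := by
    rw [← pow_mul, ← mul_assoc, ← pow_add, Nat.div_add_mod]
  have hnd : ¬ p ^ t ∣ p ^ (w % t) * c := by
    intro h
    have hlt : w % t < t := Nat.mod_lt _ (by omega)
    have h2 : p ^ (w % t + 1) ∣ p ^ (w % t) * c := (pow_dvd_pow p hlt).trans h
    rw [pow_succ] at h2
    exact hc (Nat.dvd_of_mul_dvd_mul_left (pow_pos hp0 _) h2)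
  have hm := Nat.maxPowDvdDiv_of_pow_mul_eq (mul_ne_zero (pow_ne_zero w hp0.ne') hc0) e hnd
  have hv : Nat.maxPowDiv (p ^ t) (p ^ w * c) = w / t := congrArg Prod.fst hm
  unfold lastNonzeroDigit
  rw [hv, ← e, Nat.mul_div_cancel_left _ (pow_pos (pow_pos hp0 _) _)]

theorem lnz_aux_le (p t : ℕ) (hp : p.Prime) (r s c d : ℕ) (hs : s < t)
    (hd : ¬ p ∣ d) (h : (p ^ r * c) % p ^ t = (p ^ s * d) % p ^ t) : r ≤ s := by
  by_contra hlt
  push Not at hlt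
  have h1 : p ^ (s + 1) ∣ p ^ r * c := (pow_dvd_pow p hlt).trans (dvd_mul_right _ _)
  have h2 : p ^ (s + 1) ∣ p ^ s * d :=
    ((Nat.ModEq.dvd_iff (m := p ^ t) h (pow_dvd_pow p hs)).1 h1)
  rw [pow_succ] at h2
  exact hd (Nat.dvd_of_mul_dvd_mul_left (pow_pos hp.pos _) h2)

theorem lnz_aux_eq (p t : ℕ) (hp : p.Prime) (ht : 1 < t) (v w x y : ℕ)
    (hx : ¬ p ∣ x) (hy : ¬ p ∣ y)
    (h : lnz (p ^ t) (p ^ v * x) = lnz (p ^ t) (p ^ w * y)) :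
    v * (p ^ v * x) ≡ w * (p ^ w * y) [MOD t] := by
  have hx' : ¬ p ∣ x ^ (p ^ v * x) := fun h => hx (hp.dvd_of_dvd_pow h)
  have hy' : ¬ p ∣ y ^ (p ^ w * y) := fun h => hy (hp.dvd_of_dvd_pow h)
  unfold lnz at h
  rw [mul_pow (p ^ v) x, mul_pow (p ^ w) y, ← pow_mul, ← pow_mul,
    lnz_aux_digit p t hp ht _ _ hx', lnz_aux_digit p t hp ht _ _ hy'] at h
  exact le_antisymm
    (lnz_aux_le p t hp _ _ _ _ (Nat.mod_lt _ (by omega)) hy' h)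
    (lnz_aux_le p t hp _ _ _ _ (Nat.mod_lt _ (by omega)) hx' h.symm)

theorem stmt_15 (p t : ℕ) (hp : p.Prime) (ht : 1 < t)
    (hper : ∃ T : ℕ, 0 < T ∧ ∃ n₀ : ℕ, ∀ n ≥ n₀,
      lnz (p ^ t) (p ^ t * (n + T)) = lnz (p ^ t) (p ^ t * n)) :
    ∃ s : ℕ, t = p ^ s := by
  obtain ⟨T, hT, n₀, hper⟩ := hper
  have hk : ∀ k : ℕ, ∀ n ≥ n₀,
      lnz (p ^ t) (p ^ t * (n + k * T)) = lnz (p ^ t) (p ^ t * n) := by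
    intro k
    induction k with
    | zero => intro n _; simp
    | succ k ih =>
      intro n hn
      rw [← ih n hn, ← hper (n + k * T) (by omega)]
      congr 2
      ring
  obtain ⟨e, T', hT', hTe⟩ := Nat.exists_eq_pow_mul_and_not_dvd
    (n := t * T) (by positivity) p hp.ne_one
  have hp0 := hp.pos
  have hpe : 0 < p ^ e := pow_pos hp0 _
  set y := 1 + t * p * (n₀ + T') with hy
  have hle : n₀ + T' ≤ p * y := by
    have h1 : n₀ + T' ≤ t * p * (n₀ + T') := Nat.le_mul_of_pos_left _ (by positivity)
    have h2 : y ≤ p * y := Nat.le_mul_of_pos_left _ hp0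
    omega
  obtain ⟨x, hx⟩ : ∃ x, p * y = x + T' := ⟨p * y - T', by omega⟩
  have hpx : ¬ p ∣ x := by
    intro h
    exact hT' ((Nat.dvd_add_right h).1 (hx ▸ dvd_mul_right p y))
  have hpy : ¬ p ∣ y := by
    intro h
    have : p ∣ t * p * (n₀ + T') := ⟨t * (n₀ + T'), by ring⟩
    exact hp.one_lt.ne' (Nat.dvd_one.1 ((Nat.dvd_add_left this).1 (hy ▸ h)))
  have hxn : n₀ ≤ p ^ e * x := by
    have : x ≤ p ^ e * x := Nat.le_mul_of_pos_left _ hpe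
    omega
  have hsum : p ^ e * x + t * T = p ^ (e + 1) * y := by
    rw [hTe, ← mul_add, ← hx]; ring
  have h := hk t _ hxn
  rw [hsum, ← mul_assoc, ← mul_assoc, ← pow_add, ← pow_add] at h
  have h2 := lnz_aux_eq p t hp ht _ _ _ _ hpy hpx h
  have h3 : p ^ (t + e) * x ≡ p ^ (t + (e + 1)) * y [MOD t] := by
    have : p ^ (t + (e + 1)) * y = p ^ (t + e) * x + t * (p ^ t * T) := by
      rw [pow_add, mul_assoc, ← hsum, pow_add]; ring
    rw [this]
    simp [Nat.ModEq]
  have h4 := h2.trans (h3.mul_left (t + e))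
  have h5 : t ∣ p ^ (t + (e + 1)) * y := by
    have := (Nat.modEq_iff_dvd' (by gcongr <;> omega)).1 h4.symm
    rwa [← Nat.sub_mul, show t + (e + 1) - (t + e) = 1 by omega, one_mul] at this
  have hcop : Nat.Coprime t y := by
    rw [hy, mul_assoc]; simp
  obtain ⟨s, _, hs⟩ := (Nat.dvd_prime_pow hp).1 (hcop.dvd_of_dvd_mul_right h5)
  exact ⟨s, hs⟩
end

section
/- Let p be an odd prime, t > 1 an integer with t = p^s a power of p, and define S(n) = 𝔖_{p^t}(p^t·n). Then the sequence S is not eventually periodic. -/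
theorem mpd_aux (b e x : ℕ) (hb : 1 < b) (hx : ¬ b ∣ x) :
    Nat.maxPowDiv b (b ^ e * x) = e := by
  have hx0 : x ≠ 0 := by rintro rfl; exact hx (dvd_zero _)
  have hb0 : 0 < b := by omega
  have h0 : b ^ e * x ≠ 0 := by positivity
  have h1 : e ≤ Nat.maxPowDiv b (b ^ e * x) :=
    (Nat.pow_dvd_iff_le_padicValNat (by omega) h0).1 (dvd_mul_right _ _)
  have h2 := pow_padicValNat_dvd (p := b) (n := b ^ e * x)
  by_contra hne
  have h3 : e + 1 ≤ Nat.maxPowDiv b (b ^ e * x) := by omega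
  have h4 : b ^ (e+1) ∣ b ^ e * x := (pow_dvd_pow _ h3).trans h2
  rw [pow_succ] at h4
  exact hx (Nat.dvd_of_mul_dvd_mul_left (by positivity) h4)

theorem lnz_aux_s16 (p t s k m : ℕ) (hp : p.Prime) (ht : 1 < t)
    (hts : t = p ^ s) (hm : ¬ p ∣ m) (h1 : p ^ k * m ≡ 1 [MOD (p - 1)]) :
    lnz (p ^ t) (p ^ t * (p ^ k * m)) ≡ m [MOD p] := by
  have hst : s < t := by rw [hts]; exact Nat.lt_pow_self hp.one_lt
  obtain ⟨w, hw⟩ : t ∣ p ^ t * (p ^ k * m) := by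
    apply Dvd.dvd.mul_right
    conv_lhs => rw [hts]
    exact pow_dvd_pow _ hst.le
  have hp1 : p ≡ 1 [MOD (p-1)] := by
    have := hp.one_lt
    exact ((Nat.modEq_iff_dvd' this.le).2 dvd_rfl).symm
  have hm0 : m ≠ 0 := by rintro rfl; exact hm (dvd_zero _)
  have hp0 := hp.pos
  have hpt : 1 < p ^ t := Nat.one_lt_pow (by omega) hp.one_lt
  have hppt : p ∣ p ^ t := dvd_pow_self _ (by omega)
  have hN : p ^ t * (p ^ k * m) ≡ 1 [MOD (p-1)] := by
    simpa using (hp1.pow t).mul h1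
  have hNpos : 1 ≤ p ^ t * (p ^ k * m) := Nat.one_le_iff_ne_zero.2 (by positivity)
  obtain ⟨j, hj⟩ := (Nat.modEq_iff_dvd' hNpos).1 hN.symm
  have hE : (p ^ t * (p ^ k * m)) ^ (p ^ t * (p ^ k * m))
      = (p ^ t) ^ ((t + k) * w) * m ^ (p ^ t * (p ^ k * m)) := by
    have : p ^ t * (p ^ k * m) = p ^ (t + k) * m := by ring
    generalize hNN : p ^ t * (p ^ k * m) = N at *
    have e2 : N ^ N = p ^ ((t + k) * N) * m ^ N := by
      conv_lhs => rw [show N ^ N = (p ^ (t + k) * m) ^ N by rw [← this]]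
      rw [mul_pow, ← pow_mul]
    rw [e2, ← pow_mul]
    congr 2
    rw [hw]; ring
  have hnd : ¬ p ^ t ∣ m ^ (p ^ t * (p ^ k * m)) := fun h =>
    hm (hp.dvd_of_dvd_pow (hppt.trans h))
  unfold lnz lastNonzeroDigit
  rw [hE, mpd_aux _ _ _ hpt hnd, Nat.mul_div_cancel_left _ (by positivity)]
  refine ((Nat.mod_modEq _ _).of_dvd hppt).trans ?_
  have : p ^ t * (p ^ k * m) = (p - 1) * j + 1 := by omega
  rw [this, pow_succ, pow_mul]
  have hf : m ^ (p - 1) ≡ 1 [MOD p] := by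
    rw [← Nat.totient_prime hp]
    exact Nat.ModEq.pow_totient ((Nat.Prime.coprime_iff_not_dvd hp).2 hm).symm
  simpa using (hf.pow j).mul_right m

theorem stmt_16 (p t s : ℕ) (hp : p.Prime) (hodd : Odd p) (ht : 1 < t)
    (hts : t = p ^ s) :
    ¬ ∃ T : ℕ, 0 < T ∧ ∃ n₀ : ℕ, ∀ n ≥ n₀,
      lnz (p ^ t) (p ^ t * (n + T)) = lnz (p ^ t) (p ^ t * n) := by
  rintro ⟨T, hT, n₀, h⟩
  have hit : ∀ j : ℕ, ∀ n ≥ n₀,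
      lnz (p ^ t) (p ^ t * (n + j * T)) = lnz (p ^ t) (p ^ t * n) := by
    intro j
    induction j with
    | zero => simp
    | succ j ih =>
      intro n hn
      rw [← ih n hn, ← h (n + j * T) (by omega)]
      congr 2; ring
  have hp2 := hp.two_le
  have hp3 : 3 ≤ p := by
    rcases hodd with ⟨a, ha⟩; omega
  have hT' : (p - 1) * T ≠ 0 := Nat.mul_ne_zero (by omega) (by omega)
  obtain ⟨c, q, hq, hcq⟩ := Nat.exists_eq_pow_mul_and_not_dvd hT' p (by omega)
  have hp1 : p ≡ 1 [MOD (p-1)] :=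
    ((Nat.modEq_iff_dvd' (by omega)).2 dvd_rfl).symm
  have key : ∀ u, ¬ p ∣ u → u ≡ 1 [MOD (p - 1)] → u ≡ q [MOD p] := by
    intro u hu hu1
    have hu0 : 0 < u := Nat.pos_of_ne_zero (by rintro rfl; exact hu (dvd_zero _))
    have hge : p ^ (c + 1 + n₀) * u ≥ n₀ := by
      have : c + 1 + n₀ < p ^ (c + 1 + n₀) := Nat.lt_pow_self hp.one_lt
      nlinarith
    have e := hit (p - 1) _ hge
    have h1 : p ^ (c + 1 + n₀) * u ≡ 1 [MOD (p-1)] := by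
      simpa using (hp1.pow (c+1+n₀)).mul hu1
    have hs : p ^ (c + 1 + n₀) * u + (p - 1) * T = p ^ c * (p * (p ^ n₀ * u) + q) := by
      rw [hcq]; ring
    have h2 : p ^ c * (p * (p ^ n₀ * u) + q) ≡ 1 [MOD (p-1)] := by
      rw [← hs]
      have : (p - 1) * T ≡ 0 [MOD (p-1)] := (Nat.modEq_zero_iff_dvd).2 (dvd_mul_right _ _)
      simpa using h1.add this
    have hnd : ¬ p ∣ (p * (p ^ n₀ * u) + q) := by
      rwa [Nat.dvd_add_right (dvd_mul_right _ _)]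
    have a1 := lnz_aux_s16 p t s _ u hp ht hts hu h1
    have a2 := lnz_aux_s16 p t s _ _ hp ht hts hnd h2
    rw [hs] at e
    rw [e] at a2
    refine a1.symm.trans (a2.trans ?_)
    simp [Nat.ModEq]
  have k1 := key 1 (by simp; omega) rfl
  have k2 := key (p + (p - 1)) (by
    rw [Nat.dvd_add_right dvd_rfl]
    exact Nat.not_dvd_of_pos_of_lt (by omega) (by omega)) (by
    simpa [Nat.ModEq] using hp1)
  have k3 := k1.trans k2.symm
  have := (Nat.modEq_iff_dvd' (by omega)).1 k3
  have h4 : p + (p - 1) - 1 = p + (p - 2) := by omega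
  rw [h4, Nat.dvd_add_right dvd_rfl] at this
  exact Nat.not_dvd_of_pos_of_lt (by omega) (by omega) this
end

section
/- Let s ≥ 0 be an integer and b = 2^(2^s). Then 𝔖_b(n) = 𝔖_b(n + b) for every positive integer n; i.e., the sequence of last non-zero digits of n^n in base b is purely periodic with period b. -/
lemma pow_aux (x y : ℤ) (j : ℕ) (h : (2:ℤ) ^ (j+1) ∣ x - y) (a : ℕ) :
    (2:ℤ) ^ (j + 1 + a) ∣ x ^ 2 ^ a - y ^ 2 ^ a := by
  induction a with
  | zero => simpa using h
  | succ a ih =>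
    have e : x ^ 2 ^ (a+1) - y ^ 2 ^ (a+1) = (x ^ 2 ^ a - y ^ 2 ^ a) * (x ^ 2 ^ a + y ^ 2 ^ a) := by
      rw [pow_succ 2 a, pow_mul, pow_mul]; ring
    rw [e, ← add_assoc, pow_succ]
    apply mul_dvd_mul ih
    have h1 : (2:ℤ) ∣ x ^ 2 ^ a - y ^ 2 ^ a := (dvd_pow_self 2 (by omega)).trans ih
    omega

lemma modEq_of_pow (x y k a : ℕ) (ha : a < k) (h : x ≡ y [MOD 2 ^ (k - a)]) :
    x ^ 2 ^ a ≡ y ^ 2 ^ a [MOD 2 ^ k] := by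
  have h' := (Nat.modEq_iff_dvd.1 h)
  push_cast at h'
  have := pow_aux y x (k - a - 1) (by rwa [show k - a - 1 + 1 = k - a by omega]) a
  rw [show k - a - 1 + 1 + a = k by omega] at this
  apply Nat.modEq_iff_dvd.2
  push_cast
  exact this

lemma odd_pow_one (m k e : ℕ) (hm : Odd m) (h : 2 ^ k ∣ e) : m ^ e ≡ 1 [MOD 2 ^ k] := by
  obtain ⟨c, rfl⟩ := h
  rcases Nat.eq_zero_or_pos k with rfl | hk
  · simp [Nat.modEq_one]
  have h1 : m ^ 2 ^ (k-1) ≡ 1 ^ 2 ^ (k-1) [MOD 2 ^ k] := by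
    apply modEq_of_pow _ _ _ _ (by omega)
    rw [show k - (k - 1) = 1 by omega, pow_one]
    exact Nat.odd_iff.1 hm
  have h2 := h1.pow (2 * c)
  rw [← pow_mul, ← mul_assoc, ← pow_succ, show k - 1 + 1 = k by omega] at h2
  simpa using h2

lemma digit_aux (k a m n : ℕ) (hk : 0 < k) (hm : Odd m) (hn : n = 2 ^ a * m) :
    lnz (2 ^ k) n = 2 ^ (a * n % k) * m ^ n % 2 ^ k := by
  have hb : 1 < 2 ^ k := Nat.one_lt_two_pow (by omega)
  have e : n ^ n = (2 ^ k) ^ (a * n / k) * (2 ^ (a * n % k) * m ^ n) := by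
    rw [← mul_assoc, ← pow_mul, ← pow_add, Nat.div_add_mod, pow_mul, ← mul_pow, ← hn]
  have hnd : ¬ 2 ^ k ∣ 2 ^ (a * n % k) * m ^ n := by
    intro h
    have hc : Nat.Coprime (2 ^ k) (m ^ n) :=
      Nat.Coprime.pow _ _ (Nat.coprime_two_left.2 hm)
    have := hc.dvd_of_dvd_mul_right h
    have := (Nat.pow_dvd_pow_iff_le_right (by norm_num)).1 this
    have := Nat.mod_lt (a * n) hk
    omega
  have hv : padicValNat (2 ^ k) (n ^ n) = a * n / k := by
    rw [e, padicValNat_base_pow_mul hb (by intro h; exact hnd (h ▸ dvd_zero _)),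
      padicValNat.eq_zero_of_not_dvd hnd]
    simp
  unfold lnz lastNonzeroDigit
  change n ^ n / (2 ^ k) ^ padicValNat (2 ^ k) (n ^ n) % 2 ^ k = _
  rw [hv, e, Nat.mul_div_cancel_left _ (by positivity)]

lemma digit_one (k n : ℕ) (hk : 0 < k) (hkb : k ∣ 2 ^ k) (hn : 0 < n) (h : 2 ^ k ∣ n) :
    lnz (2 ^ k) n = 1 % 2 ^ k := by
  obtain ⟨a, m, hm, e⟩ := Nat.exists_eq_two_pow_mul_odd hn.ne'
  rw [digit_aux k a m n hk hm e,
    Nat.mod_eq_zero_of_dvd ((hkb.trans h).mul_left a), pow_zero, one_mul]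
  exact odd_pow_one m k n hm h

theorem stmt_17 (s : ℕ) :
    ∀ n : ℕ, 0 < n → lnz (2 ^ 2 ^ s) n = lnz (2 ^ 2 ^ s) (n + 2 ^ 2 ^ s) := by
  intro n hn
  have hk : 0 < 2 ^ s := by positivity
  have hkb : 2 ^ s ∣ 2 ^ 2 ^ s := pow_dvd_pow 2 Nat.lt_two_pow_self.le
  generalize 2 ^ s = k at *
  by_cases h : 2 ^ k ∣ n
  · rw [digit_one k n hk hkb hn h, digit_one k _ hk hkb (by omega) (Dvd.dvd.add h dvd_rfl)]
  obtain ⟨a, m, hm, e⟩ := Nat.exists_eq_two_pow_mul_odd hn.ne'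
  have hak : a < k := by
    by_contra hc
    exact h (e ▸ (pow_dvd_pow 2 (by omega)).mul_right m)
  have hm' : Odd (m + 2 ^ (k - a)) := hm.add_even (by
    rw [Nat.even_pow]; exact ⟨even_two, by omega⟩)
  have e' : n + 2 ^ k = 2 ^ a * (m + 2 ^ (k - a)) := by
    rw [mul_add, ← e, ← pow_add, show a + (k - a) = k by omega]
  rw [digit_aux k a m n hk hm e, digit_aux k a _ _ hk hm' e']
  have hr : a * (n + 2 ^ k) % k = a * n % k := by
    obtain ⟨c, hc⟩ := hkb
    rw [hc, mul_add, show a * (k * c) = k * (a * c) by ring, Nat.add_mul_mod_self_left]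
  rw [hr]
  apply Nat.ModEq.mul_left
  have h1 : m ^ n ≡ (m + 2 ^ (k - a)) ^ n [MOD 2 ^ k] := by
    have := (modEq_of_pow m (m + 2 ^ (k - a)) k a hak (by simp [Nat.ModEq])).pow m
    rwa [← pow_mul, ← pow_mul, ← e] at this
  rw [pow_add]
  simpa using h1.mul (odd_pow_one _ k (2 ^ k) hm' dvd_rfl).symm
end

section
/- Let p be a prime and t ≥ 1 an integer. The sequence 𝔖_{p^t}(n) of last non-zero digits of n^n in base p^t is eventually periodic if and only if p = 2 and t = 2^s for some integer s ≥ 0; moreover, in that case the sequence is purely periodic (𝔖_{p^t}(n) = 𝔖_{p^t}(n + p^t) for all n ≥ 1). -/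
theorem lnd_eq (p t e M : ℕ) (hp : p.Prime) (ht : 1 ≤ t) (hM : ¬ p ∣ M) :
    lastNonzeroDigit (p ^ t) (p ^ e * M) = p ^ (e % t) * M % p ^ t := by
  have hM0 : M ≠ 0 := by rintro rfl; simp at hM
  have hpos : 0 < p := hp.pos
  have hfac : (p ^ t) ^ (e / t) * (p ^ (e % t) * M) = p ^ e * M := by
    rw [← pow_mul, ← mul_assoc, ← pow_add, Nat.div_add_mod]
  have hnd : ¬ p ^ t ∣ p ^ (e % t) * M := by
    intro h
    have hlt : e % t < t := Nat.mod_lt _ ht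
    have h1 : p ^ (e % t) * p ∣ p ^ (e % t) * M := by
      rw [← pow_succ]
      exact (pow_dvd_pow p hlt).trans h
    exact hM (Nat.dvd_of_mul_dvd_mul_left (pow_pos hpos _) h1)
  have hv : padicValNat (p ^ t) (p ^ e * M) = e / t := by
    have := Nat.maxPowDvdDiv_of_pow_mul_eq (mul_ne_zero (pow_pos hpos e).ne' hM0) hfac hnd
    unfold padicValNat
    rw [this]
  have hv' : Nat.maxPowDiv (p ^ t) (p ^ e * M) = e / t := hv
  unfold lastNonzeroDigit
  rw [hv', ← hfac, Nat.mul_div_cancel_left _ (pow_pos (pow_pos hpos _) _)]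

theorem lnz_eq (p t v m : ℕ) (hp : p.Prime) (ht : 1 ≤ t) (hm : ¬ p ∣ m) :
    lnz (p ^ t) (p ^ v * m) =
      p ^ ((v * (p ^ v * m)) % t) * m ^ (p ^ v * m) % p ^ t := by
  unfold lnz
  rw [mul_pow, ← pow_mul]
  exact lnd_eq p t _ _ hp ht (fun h => hm (hp.dvd_of_dvd_pow h))

theorem lift2 (x y : ℤ) (k v : ℕ) (hk : 1 ≤ k) (h : (2 : ℤ) ^ k ∣ x - y) :
    (2 : ℤ) ^ (k + v) ∣ x ^ (2 ^ v) - y ^ (2 ^ v) := by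
  induction v with
  | zero => simpa using h
  | succ v ih =>
    have e : x ^ 2 ^ (v + 1) - y ^ 2 ^ (v + 1) =
      (x ^ 2 ^ v - y ^ 2 ^ v) * ((x ^ 2 ^ v - y ^ 2 ^ v) + 2 * y ^ 2 ^ v) := by
      rw [pow_succ 2 v]; simp only [pow_mul]; ring
    rw [e, ← add_assoc, pow_succ]
    apply mul_dvd_mul ih
    apply dvd_add _ (Dvd.intro _ rfl)
    exact (dvd_pow_self 2 (by omega)).trans ih

theorem lift2n (x y k v : ℕ) (hk : 1 ≤ k) (h : x ≡ y [MOD 2 ^ k]) :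
    x ^ (2 ^ v) ≡ y ^ (2 ^ v) [MOD 2 ^ (k + v)] := by
  have h1 := (Nat.modEq_iff_dvd.1 h)
  have := lift2 _ _ k v hk (by simpa using h1)
  exact Nat.modEq_iff_dvd.2 (by simpa using this)

theorem odd_pow_one_s18 (m t : ℕ) (hm : ¬ 2 ∣ m) : m ^ (2 ^ t) ≡ 1 [MOD 2 ^ t] := by
  have h : m ≡ 1 [MOD 2 ^ 1] := by unfold Nat.ModEq; omega
  have := lift2n m 1 1 t le_rfl h
  rw [one_pow] at this
  exact this.of_dvd (pow_dvd_pow 2 (by omega))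

theorem high_val (t s n : ℕ) (hts : t = 2 ^ s) (hn : n ≠ 0) (h : 2 ^ t ∣ n) :
    lnz (2 ^ t) n = 1 % 2 ^ t := by
  have ht : 1 ≤ t := hts ▸ Nat.one_le_two_pow
  obtain ⟨v, m, hm, rfl⟩ := Nat.exists_eq_pow_mul_and_not_dvd hn 2 (by simp)
  rw [lnz_eq 2 t v m Nat.prime_two ht hm]
  have hd : t ∣ 2 ^ t := by
    nth_rewrite 1 [hts]
    exact pow_dvd_pow 2 (hts ▸ Nat.lt_two_pow_self.le)
  have : (v * (2 ^ v * m)) % t = 0 :=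
    Nat.mod_eq_zero_of_dvd (Dvd.dvd.mul_left (hd.trans h) _)
  rw [this, pow_zero, one_mul]
  obtain ⟨c, hc⟩ := h
  rw [hc, pow_mul]
  change (m ^ 2 ^ t) ^ c ≡ 1 [MOD 2 ^ t]
  simpa using (odd_pow_one_s18 m t hm).pow c

theorem pure_per (t s n : ℕ) (hts : t = 2 ^ s) (hn : 1 ≤ n) :
    lnz (2 ^ t) (n + 2 ^ t) = lnz (2 ^ t) n := by
  by_cases h : 2 ^ t ∣ n
  · rw [high_val t s n hts (by omega) h, high_val t s _ hts (by omega) (dvd_add h dvd_rfl)]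
  have ht : 1 ≤ t := hts ▸ Nat.one_le_two_pow
  have hd : t ∣ 2 ^ t := by
    nth_rewrite 1 [hts]
    exact pow_dvd_pow 2 (hts ▸ Nat.lt_two_pow_self.le)
  obtain ⟨v, m, hm, rfl⟩ := Nat.exists_eq_pow_mul_and_not_dvd (by omega : n ≠ 0) 2 (by simp)
  have hv : v < t := by
    by_contra hc
    exact h (Dvd.dvd.mul_right (pow_dvd_pow 2 (by omega)) _)
  have e : 2 ^ v * m + 2 ^ t = 2 ^ v * (m + 2 ^ (t - v)) := by
    rw [mul_add, ← pow_add, Nat.add_sub_cancel' hv.le]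
  have h2 : 2 ∣ 2 ^ (t - v) := dvd_pow_self 2 (by omega)
  have hm' : ¬ 2 ∣ m + 2 ^ (t - v) := by omega
  rw [e, lnz_eq 2 t v _ Nat.prime_two ht hm', lnz_eq 2 t v m Nat.prime_two ht hm, ← e]
  have e1 : (v * (2 ^ v * m + 2 ^ t)) % t = (v * (2 ^ v * m)) % t := by
    obtain ⟨c, hc⟩ := hd
    have : v * (2 ^ v * m + 2 ^ t) = v * (2 ^ v * m) + t * (v * c) := by
      rw [hc]; ring
    rw [this, Nat.add_mul_mod_self_left]
  rw [e1]
  refine Nat.ModEq.mul_left _ (?_ : _ ≡ _ [MOD 2 ^ t])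
  rw [pow_add]
  have h3 := odd_pow_one_s18 _ t hm'
  have h4 : (m + 2 ^ (t - v)) ^ (2 ^ v * m) ≡ m ^ (2 ^ v * m) [MOD 2 ^ t] := by
    rw [pow_mul, pow_mul]
    apply Nat.ModEq.pow
    have := lift2n (m + 2 ^ (t - v)) m (t - v) v (by omega) (by simp [Nat.ModEq])
    rwa [Nat.sub_add_cancel hv.le] at this
  simpa using h4.mul h3

theorem val_eq_of (p t i j A B : ℕ) (hp : p.Prime) (hi : i < t)
    (hB : ¬ p ∣ B) (h : p ^ i * A % p ^ t = p ^ j * B % p ^ t) : i ≤ j := by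
  by_contra hc
  have h1 : p ^ (j + 1) ∣ p ^ j * B := by
    have h2 : p ^ j * B ≡ p ^ i * A [MOD p ^ (j + 1)] :=
      Nat.ModEq.of_dvd (pow_dvd_pow p (by omega)) (Eq.symm h)
    rw [h2.dvd_iff dvd_rfl]
    exact Dvd.dvd.mul_right (pow_dvd_pow p (by omega)) _
  rw [pow_succ] at h1
  exact hB (Nat.dvd_of_mul_dvd_mul_left (pow_pos hp.pos _) h1)

theorem main_dir (p t : ℕ) (hp : p.Prime) (ht : 1 ≤ t)
    (h : ∃ T : ℕ, 0 < T ∧ ∃ n₀ : ℕ, ∀ n ≥ n₀, lnz (p ^ t) (n + T) = lnz (p ^ t) n) :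
    p = 2 ∧ ∃ s : ℕ, t = 2 ^ s := by
  obtain ⟨T₀, hT₀, n₀, hper₀⟩ := h
  have hmul : ∀ k n, n₀ ≤ n → lnz (p ^ t) (n + k * T₀) = lnz (p ^ t) n := by
    intro k
    induction k with
    | zero => intro n _; simp
    | succ k ih =>
      intro n hn
      rw [add_mul, one_mul, ← add_assoc, hper₀ _ (by omega), ih n hn]
  have hT0 : (p ^ t * t) * T₀ ≠ 0 :=
    mul_ne_zero (mul_ne_zero (pow_pos hp.pos t).ne' (by omega)) hT₀.ne'
  have hper := hmul (p ^ t * t)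
  obtain ⟨a, T', hT', hTe⟩ := Nat.exists_eq_pow_mul_and_not_dvd hT0 p hp.ne_one
  have htT : t ∣ p ^ a * T' := by rw [← hTe]; exact ⟨p ^ t * T₀, by ring⟩
  have hta : t ≤ a := by
    have h1 : p ^ t ∣ p ^ a * T' := by rw [← hTe]; exact ⟨t * T₀, by ring⟩
    have h2 : p ^ t ∣ p ^ a :=
      (Nat.Coprime.pow_left t ((Nat.Prime.coprime_iff_not_dvd hp).2 hT')).dvd_of_dvd_mul_right h1
    exact (Nat.pow_dvd_pow_iff_le_right hp.one_lt).1 h2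
  rw [hTe] at hper
  -- key: for v > a
  have key : ∀ v u, a < v → n₀ ≤ v → ¬ p ∣ u →
      p ^ ((a * (p ^ v * u + p ^ a * T')) % t) *
        (p ^ (v - a) * u + T') ^ (p ^ v * u + p ^ a * T') % p ^ t =
      p ^ ((v * (p ^ v * u)) % t) * u ^ (p ^ v * u) % p ^ t := by
    intro v u hv hn hu
    have hu0 : 0 < u := Nat.pos_of_ne_zero (by rintro rfl; simp at hu)
    have h1 := hper (p ^ v * u) ((hn.trans (Nat.lt_pow_self hp.one_lt).le).trans
      (Nat.le_mul_of_pos_right _ hu0))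
    have e : p ^ v * u + p ^ a * T' = p ^ a * (p ^ (v - a) * u + T') := by
      rw [mul_add, ← mul_assoc, ← pow_add, Nat.add_sub_cancel' hv.le]
    have hnd : ¬ p ∣ p ^ (v - a) * u + T' := by
      intro hh
      exact hT' ((Nat.dvd_add_right (Dvd.dvd.mul_right (dvd_pow_self p (by omega)) _)).1 hh)
    rw [lnz_eq p t v u hp ht hu, e, lnz_eq p t a _ hp ht hnd, ← e] at h1
    exact h1
  have hnd2 : ∀ v u, a < v → ¬ p ∣ p ^ (v - a) * u + T' := by
    intro v u hv hh
    exact hT' ((Nat.dvd_add_right (Dvd.dvd.mul_right (dvd_pow_self p (by omega)) _)).1 hh)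
  have htp : ∃ s, t = p ^ s := by
    set v := a + (1 + t * n₀) with hvdef
    have hv : n₀ ≤ v := by
      have := Nat.le_mul_of_pos_left n₀ ht
      omega
    have hk := key v 1 (by omega) hv (by simpa using hp.one_lt.ne')
    have hA : ¬ p ∣ (p ^ (v - a) * 1 + T') ^ (p ^ v * 1 + p ^ a * T') :=
      fun hh => hnd2 v 1 (by omega) (hp.dvd_of_dvd_pow hh)
    have hB : ¬ p ∣ 1 ^ (p ^ v * 1) := by simpa using hp.one_lt.ne'
    have l1 := val_eq_of p t _ _ _ _ hp (Nat.mod_lt _ ht) hB hk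
    have l2 := val_eq_of p t _ _ _ _ hp (Nat.mod_lt _ ht) hA hk.symm
    have e : a * (p ^ v * 1 + p ^ a * T') ≡ v * (p ^ v * 1) [MOD t] := le_antisymm l1 l2
    have e2 : a * (p ^ v * 1 + p ^ a * T') ≡ a * p ^ v [MOD t] := by
      obtain ⟨c, hc⟩ := htT
      rw [hc, mul_one, mul_add]
      have : a * (t * c) = t * (a * c) := by ring
      rw [this]; simp [Nat.ModEq]
    have e3 := e2.symm.trans e
    have e4 : v * (p ^ v * 1) = a * p ^ v + p ^ v + t * (n₀ * p ^ v) := by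
      nth_rewrite 1 [hvdef]; ring
    have e5 : a * p ^ v + 0 ≡ a * p ^ v + p ^ v [MOD t] := by
      rw [e4] at e3
      simpa [Nat.ModEq] using e3
    have e6 := Nat.ModEq.add_left_cancel' _ e5
    have e7 : t ∣ p ^ v := (Nat.modEq_zero_iff_dvd).1 e6.symm
    obtain ⟨s, _, hs⟩ := (Nat.dvd_prime_pow hp).1 e7
    exact ⟨s, hs⟩
  obtain ⟨s, hs⟩ := htp
  have hp2 : p = 2 := by
    by_contra hne
    have hodd : Odd p := hp.odd_of_ne_two hne
    have hst : s ≤ t := hs ▸ (Nat.lt_pow_self hp.one_lt).le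
    have hdv : ∀ v, t ≤ v → t ∣ p ^ v := fun v hv => by
      nth_rewrite 1 [hs]; exact pow_dvd_pow p (by omega)
    set v := a + 1 + n₀ with hvdef
    have hp1 := hp.one_lt
    have hmodp : ∀ u, ¬ p ∣ u →
        T' ^ (p ^ v * u + p ^ a * T') ≡ u ^ (p ^ v * u) [MOD p] := by
      intro u hu
      have hk := key v u (by omega) (by omega) hu
      have z1 : (a * (p ^ v * u + p ^ a * T')) % t = 0 := by
        apply Nat.mod_eq_zero_of_dvd
        apply Dvd.dvd.mul_left
        exact dvd_add (Dvd.dvd.mul_right (hdv v (by omega)) _) htT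
      have z2 : (v * (p ^ v * u)) % t = 0 := by
        apply Nat.mod_eq_zero_of_dvd
        apply Dvd.dvd.mul_left
        exact Dvd.dvd.mul_right (hdv v (by omega)) _
      rw [z1, z2, pow_zero, one_mul, one_mul] at hk
      have hk' := Nat.ModEq.of_dvd (dvd_pow_self p (by omega : t ≠ 0)) hk
      refine Nat.ModEq.trans ?_ hk'
      apply Nat.ModEq.pow
      have : p ^ (v - a) * u ≡ 0 [MOD p] :=
        Nat.modEq_zero_iff_dvd.2 (Dvd.dvd.mul_right (dvd_pow_self p (by omega)) _)
      simpa using (this.add_right T').symm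
    haveI := Fact.mk hp
    have cast : ∀ u, ¬ p ∣ u →
        (T' : ZMod p) ^ (p ^ v * u + p ^ a * T') = (u : ZMod p) ^ (p ^ v * u) := by
      intro u hu
      have := (ZMod.natCast_eq_natCast_iff _ _ _).2 (hmodp u hu)
      push_cast at this
      exact this
    have hT'0 : (T' : ZMod p) ≠ 0 := by
      rwa [Ne, ZMod.natCast_eq_zero_iff]
    have hferm := ZMod.pow_card_sub_one_eq_one hT'0
    have c1 := cast 1 (by simpa using hp.one_lt.ne')
    obtain ⟨q, rfl⟩ : ∃ q, p = q + 1 := ⟨p - 1, by omega⟩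
    have hu2 : ¬ (q + 1) ∣ 2 * q + 1 := by
      intro hh
      have : (q + 1) ∣ (2 * q + 1) + 1 := ⟨2, by ring⟩
      have h1 := (Nat.dvd_add_right hh).1 this
      exact hp.one_lt.ne' (Nat.dvd_one.1 h1)
    have c2 := cast (2 * q + 1) hu2
    have hcu : ((2 * q + 1 : ℕ) : ZMod (q + 1)) = -1 := by
      have : (((2 * q + 1) + 1 : ℕ) : ZMod (q + 1)) = 0 := by
        rw [ZMod.natCast_eq_zero_iff]; exact ⟨2, by ring⟩
      rw [Nat.cast_add, Nat.cast_one] at this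
      exact eq_neg_of_add_eq_zero_left this
    rw [hcu, Odd.neg_one_pow (Odd.mul (hodd.pow) ⟨q, rfl⟩)] at c2
    have e : (q + 1) ^ v * (2 * q + 1) + (q + 1) ^ a * T' =
        ((q + 1) ^ v * 1 + (q + 1) ^ a * T') + (q + 1 - 1) * (2 * (q + 1) ^ v) := by
      rw [Nat.add_sub_cancel]; ring
    rw [e, pow_add, pow_mul, hferm, one_pow, mul_one, c1] at c2
    simp only [Nat.cast_one, one_pow] at c2
    haveI : Fact (2 < q + 1) := ⟨by have := hp.two_le; omega⟩
    exact ZMod.neg_one_ne_one c2.symm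
  exact ⟨hp2, s, hp2 ▸ hs⟩

theorem stmt_18 (p t : ℕ) (hp : p.Prime) (ht : 1 ≤ t) :
    ((∃ T : ℕ, 0 < T ∧ ∃ n₀ : ℕ, ∀ n ≥ n₀, lnz (p ^ t) (n + T) = lnz (p ^ t) n) ↔
      (p = 2 ∧ ∃ s : ℕ, t = 2 ^ s)) ∧
    ((p = 2 ∧ ∃ s : ℕ, t = 2 ^ s) →
      ∀ n : ℕ, 1 ≤ n → lnz (p ^ t) (n + p ^ t) = lnz (p ^ t) n) := by
  have hB : (p = 2 ∧ ∃ s : ℕ, t = 2 ^ s) →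
      ∀ n : ℕ, 1 ≤ n → lnz (p ^ t) (n + p ^ t) = lnz (p ^ t) n := by
    rintro ⟨rfl, s, hs⟩ n hn
    exact pure_per t s n hs hn
  exact ⟨⟨main_dir p t hp ht, fun h => ⟨p ^ t, pow_pos hp.pos _, 1, hB h⟩⟩, hB⟩
end
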